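/- Let n ≥ 3 and let μ(n,2) ∈ ℝ^n be the vector whose first two coordinates equal 1 − 2/n and whose remaining n−2 coordinates equal −2/n. Then the minimal integer r ≥ 1 such that 0 ∈ C_r(O_{μ(n,2)}) equals n/2 if n is even, and equals (n+3)/2 if n is odd. -/

import Mathlib

/-- The `r`-th partial convex hull of a set `X`: the union of the convex hulls of all
`r`-tuples of points of `X`. -/
def partialConvexHull {E : Type*} [AddCommGroup E] [Module ℝ E]
    (r : ℕ) (X : Set E) : Set E :=
  {y | ∃ f : Fin r → E, (∀ i, f i ∈ X) ∧ y ∈ convexHull ℝ (Set.range f)}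

/-- The coadjoint orbit `O_λ` of `SU(n)`: the set of `n × n` complex Hermitian matrices
of trace zero whose eigenvalues, listed with multiplicity, are the entries of `lam`. -/
def coadjointOrbit {n : ℕ} (lam : Fin n → ℝ) : Set (Matrix (Fin n) (Fin n) ℂ) :=
  {A | A.trace = 0 ∧ ∃ hA : A.IsHermitian, ∃ σ : Equiv.Perm (Fin n),
      ∀ i, hA.eigenvalues (σ i) = lam i}

/-!
`A` lies in the orbit of the weight `μ(n,k)` exactly when `A + (k/n)·1` is an orthogonal projection
of rank `k`, so `0 ∈ C_r` says that `(k/n)·1` is a convex combination `∑ wᵢ Pᵢ` of `r` such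
projections. If `k (r - 1) < n`, dropping the `i`-th term leaves a singular matrix
`(k/n)·1 - wᵢ Pᵢ`; as `Pᵢ` is idempotent this forces `wᵢ = k/n`. Summing over `i` gives `k r = n`.
For `k = 2` this leaves `r = n/2` or `2 (r - 1) ≥ n`.

Conversely, coordinate projections turn the problem into a fractional cover of the `n` coordinates
by `k`-subsets. If `n = k m`, take `m` disjoint blocks; if `n = k m + (k + 1)`, take `m` disjoint
blocks and all the `k`-subsets of the remaining `k + 1` coordinates, the latter with weight `1/n`.
-/

open Finset

theorem rank_sum_le {K m n ι : Type*} [Field K] [Finite m] [Fintype n] (s : Finset ι)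
    (M : ι → Matrix m n K) : (∑ i ∈ s, M i).rank ≤ ∑ i ∈ s, (M i).rank := by
  have := Fintype.ofFinite m
  refine s.le_sum_of_subadditive _ Matrix.rank_zero.le (fun A B => ?_) M
  unfold Matrix.rank
  rw [Matrix.mulVecLin_add]
  exact (Submodule.finrank_mono (LinearMap.range_add_le _ _)).trans
    (Submodule.finrank_add_le_finrank_add_finrank _ _)

theorem rank_smul_le {K F m n : Type*} [Field K] [Field F] [Algebra K F] [Finite m] [Fintype n]
    (c : K) (M : Matrix m n F) : (c • M).rank ≤ M.rank := by
  classical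
  have := Fintype.ofFinite m
  calc (c • M).rank = ((c • (1 : Matrix m m F)) * M).rank := by
        rw [Matrix.smul_mul, Matrix.one_mul]
    _ ≤ M.rank := Matrix.rank_mul_le_right _ _

theorem rank_eq_trace_of_isIdempotentElem {K n : Type*} [Field K] [Fintype n]
    {P : Matrix n n K} (hP : IsIdempotentElem P) : (P.rank : K) = P.trace := by
  classical
  have hP' : IsIdempotentElem P.toLin' := hP.map Matrix.toLinAlgEquiv'
  rw [← Matrix.trace_toLin'_eq, (LinearMap.IsIdempotentElem.isProj_range _ hP').trace]
  rfl

theorem isUnit_algebraMap_sub_smul {K A : Type*} [Field K] [Ring A] [Algebra K A] {p : A}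
    (hp : IsIdempotentElem p) {c t : K} (ht : t ≠ 0) (hct : c ≠ t) :
    IsUnit (algebraMap K A t - c • p) := by
  have hsplit : algebraMap K A t - c • p = t • (1 - p) + (t - c) • p := by
    rw [Algebra.algebraMap_eq_smul_one]
    module
  have htc : t - c ≠ 0 := sub_ne_zero.2 hct.symm
  refine isUnit_iff_exists.2 ⟨t⁻¹ • (1 - p) + (t - c)⁻¹ • p, ?_, ?_⟩ <;>
    simp [hsplit, add_mul, mul_add, hp.eq, hp.one_sub.eq, hp.mul_one_sub_self,
      hp.one_sub_mul_self, smul_smul, ht, htc]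

theorem coeff_eq_of_sum_smul_eq_algebraMap {K F ι m : Type*} [Field K] [Field F] [Algebra K F]
    [Fintype ι] [DecidableEq ι] [Fintype m] [DecidableEq m] {c : ι → K} {P : ι → Matrix m m F}
    {t : K} {i : ι} (hP : IsIdempotentElem (P i)) (ht : t ≠ 0)
    (hsum : ∑ j, c j • P j = algebraMap K (Matrix m m F) t)
    (hrank : ∑ j ∈ univ.erase i, (P j).rank < Fintype.card m) : c i = t := by
  by_contra hct
  have hrest : ∑ j ∈ univ.erase i, c j • P j = algebraMap K (Matrix m m F) t - c i • P i := by
    rw [eq_sub_iff_add_eq, sum_erase_add _ _ (mem_univ i), hsum]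
  have hfull : (∑ j ∈ univ.erase i, c j • P j).rank = Fintype.card m :=
    hrest ▸ Matrix.rank_of_isUnit _ (isUnit_algebraMap_sub_smul hP ht hct)
  exact hrank.not_ge <| calc
    Fintype.card m = (∑ j ∈ univ.erase i, c j • P j).rank := hfull.symm
    _ ≤ ∑ j ∈ univ.erase i, (c j • P j).rank := rank_sum_le _ _
    _ ≤ ∑ j ∈ univ.erase i, (P j).rank := sum_le_sum fun j _ => rank_smul_le _ _

theorem isIdempotentElem_add_algebraMap_iff {𝕜 m : Type*} [RCLike 𝕜] [Fintype m] [DecidableEq m]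
    {A : Matrix m m 𝕜} (hA : A.IsHermitian) (t : ℝ) :
    IsIdempotentElem (A + algebraMap ℝ (Matrix m m 𝕜) t) ↔
      ∀ i, hA.eigenvalues i + t = 0 ∨ hA.eigenvalues i + t = 1 := by
  have hAt : IsSelfAdjoint (A + algebraMap ℝ (Matrix m m 𝕜) t) :=
    hA.isSelfAdjoint.add (.algebraMap _ (.all t))
  rw [isIdempotentElem_iff_spectrum_subset ℝ _ hAt, ← spectrum.add_singleton_eq,
    hA.spectrum_real_eq_range_eigenvalues, Set.add_singleton, ← Set.range_comp,
    Set.range_subset_iff]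
  rfl

theorem mem_convexHull_range_iff {R E ι : Type*} [Field R] [LinearOrder R]
    [IsStrictOrderedRing R] [AddCommGroup E] [Module R E] [Fintype ι] {x : ι → E} {y : E} :
    y ∈ convexHull R (Set.range x) ↔
      ∃ w : ι → R, (∀ i, 0 ≤ w i) ∧ ∑ i, w i = 1 ∧ ∑ i, w i • x i = y := by
  classical
  have hrange : Set.range x =
      Fintype.linearCombination R x '' Set.range fun i => Pi.single i 1 := by
    simp [← Set.range_comp, Function.comp_def, Fintype.linearCombination_apply_single]
  rw [hrange, ← LinearMap.image_convexHull, convexHull_rangle_single_eq_stdSimplex]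
  simp [stdSimplex, Fintype.linearCombination_apply, and_assoc]

theorem mem_partialConvexHull_card_iff {E ι : Type*} [AddCommGroup E] [Module ℝ E] [Fintype ι]
    {X : Set E} {y : E} :
    y ∈ partialConvexHull (Fintype.card ι) X ↔
      ∃ (w : ι → ℝ) (x : ι → E), (∀ i, 0 ≤ w i) ∧ ∑ i, w i = 1 ∧ (∀ i, x i ∈ X) ∧
        ∑ i, w i • x i = y := by
  have e := Fintype.equivFin ι
  constructor
  · rintro ⟨x, hx, hy⟩
    rw [← e.surjective.range_comp, mem_convexHull_range_iff] at hy
    obtain ⟨w, hw, hsum, hy⟩ := hy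
    exact ⟨w, x ∘ e, hw, hsum, fun i => hx (e i), hy⟩
  · rintro ⟨w, x, hw, hsum, hx, hy⟩
    refine ⟨x ∘ e.symm, fun i => hx _, ?_⟩
    rw [e.symm.surjective.range_comp, mem_convexHull_range_iff]
    exact ⟨w, hw, hsum, hy⟩

theorem exists_perm_mem_iff {α : Type*} [Finite α] {s t : Finset α} (h : #s = #t) :
    ∃ σ : Equiv.Perm α, ∀ i, σ i ∈ t ↔ i ∈ s := by
  classical
  let e := equivOfCardEq h
  exact ⟨e.extendSubtype, fun i =>
    ⟨not_imp_not.1 (e.extendSubtype_not_mem i), e.extendSubtype_mem i⟩⟩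

/-- The vector `μ(n,k)`: `k` coordinates `1 - k/n` followed by `n - k` coordinates `-k/n`, the
`k`-th fundamental weight of `SU(n)` when `0 < k < n`. -/
noncomputable def fundWeight (n k : ℕ) : Fin n → ℝ :=
  fun i => if (i : ℕ) < k then 1 - (k : ℝ) / n else -((k : ℝ) / n)

theorem natCast_mul_div_eq {n k : ℕ} (hk : k ≤ n) : (n : ℝ) * (k / n) = k :=
  mul_div_cancel_of_imp' fun hn => by
    rw [Nat.cast_eq_zero] at hn ⊢
    omega

theorem sum_fundWeight {n k : ℕ} (hk : k ≤ n) : ∑ i, fundWeight n k i = 0 := by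
  have hcard : #{i : Fin n | (i : ℕ) < k} = k := by rw [Fin.card_filter_val_lt, min_eq_right hk]
  calc ∑ i, fundWeight n k i = ∑ i : Fin n, ((if (i : ℕ) < k then 1 else 0) - (k : ℝ) / n) :=
        sum_congr rfl fun i _ => by unfold fundWeight; split_ifs <;> ring
    _ = 0 := by
        rw [sum_sub_distrib, sum_boole, hcard, sum_const, card_fin, nsmul_eq_mul,
          natCast_mul_div_eq hk, sub_self]

theorem exists_perm_eq_fundWeight_iff {n k : ℕ} (hk : k ≤ n) {d : Fin n → ℝ} :
    (∃ σ : Equiv.Perm (Fin n), ∀ i, d (σ i) = fundWeight n k i) ↔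
      (∀ i, d i + k / n = 0 ∨ d i + k / n = 1) ∧ ∑ i, d i = 0 := by
  constructor
  · rintro ⟨σ, hσ⟩
    constructor
    · intro i
      have hi := hσ (σ.symm i)
      rw [σ.apply_symm_apply, fundWeight] at hi
      split_ifs at hi <;> grind
    · rw [← Equiv.sum_comp σ, sum_congr rfl fun i _ => hσ i, sum_fundWeight hk]
  · rintro ⟨h01, hsum⟩
    have hcard : #{i : Fin n | (i : ℕ) < k} = #{i | d i + k / n = 1} := by
      rw [Fin.card_filter_val_lt, min_eq_right hk]
      refine Nat.cast_injective (R := ℝ) ?_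
      calc (k : ℝ) = ∑ i, (d i + k / n) := by
            rw [sum_add_distrib, hsum, sum_const, card_fin, nsmul_eq_mul, natCast_mul_div_eq hk,
              zero_add]
        _ = ∑ i, if d i + k / n = 1 then 1 else 0 := sum_congr rfl fun i _ => by grind
        _ = #{i | d i + k / n = 1} := by rw [sum_boole]
    obtain ⟨σ, hσ⟩ := exists_perm_mem_iff hcard
    refine ⟨σ, fun i => ?_⟩
    have hi := hσ i
    simp only [mem_filter_univ] at hi
    unfold fundWeight
    grind

theorem mem_coadjointOrbit_fundWeight_iff {n k : ℕ} (hk : k ≤ n)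
    {A : Matrix (Fin n) (Fin n) ℂ} :
    A ∈ coadjointOrbit (fundWeight n k) ↔
      IsStarProjection (A + algebraMap ℝ _ (k / n : ℝ)) ∧
        (A + algebraMap ℝ _ (k / n : ℝ)).trace = k := by
  have htrace : (A + algebraMap ℝ _ (k / n : ℝ)).trace = k ↔ A.trace = 0 := by
    have : (algebraMap ℝ (Matrix (Fin n) (Fin n) ℂ) (k / n)).trace = k := by
      rw [Algebra.algebraMap_eq_smul_one, Matrix.trace_smul, Matrix.trace_one, Fintype.card_fin,
        Complex.real_smul, mul_comm]
      exact_mod_cast natCast_mul_div_eq hk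
    rw [Matrix.trace_add, this, add_eq_right]
  have hself : IsSelfAdjoint (A + algebraMap ℝ _ (k / n : ℝ)) ↔ A.IsHermitian := by
    have : IsSelfAdjoint (algebraMap ℝ (Matrix (Fin n) (Fin n) ℂ) (k / n)) := .algebraMap _ (.all _)
    exact ⟨fun h => by simpa [Matrix.isHermitian_iff_isSelfAdjoint] using h.sub this,
      fun h => h.isSelfAdjoint.add this⟩
  rw [htrace, isStarProjection_iff, hself]
  constructor
  · rintro ⟨h0, hA, hσ⟩
    rw [exists_perm_eq_fundWeight_iff hk] at hσ
    exact ⟨⟨(isIdempotentElem_add_algebraMap_iff hA _).2 hσ.1, hA⟩, h0⟩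
  · rintro ⟨⟨hidem, hA⟩, h0⟩
    have hsum : ∑ i, hA.eigenvalues i = 0 := by
      rw [hA.trace_eq_sum_eigenvalues, ← RCLike.ofReal_sum] at h0
      exact RCLike.ofReal_eq_zero.1 h0
    exact ⟨h0, hA, (exists_perm_eq_fundWeight_iff hk).2
      ⟨(isIdempotentElem_add_algebraMap_iff hA _).1 hidem, hsum⟩⟩

theorem zero_mem_partialConvexHull_fundWeight_iff {ι : Type*} [Fintype ι] {n k : ℕ} (hk : k ≤ n) :
    0 ∈ partialConvexHull (Fintype.card ι) (coadjointOrbit (fundWeight n k)) ↔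
      ∃ (w : ι → ℝ) (P : ι → Matrix (Fin n) (Fin n) ℂ), (∀ i, 0 ≤ w i) ∧ ∑ i, w i = 1 ∧
        (∀ i, IsStarProjection (P i) ∧ (P i).trace = k) ∧
        ∑ i, w i • P i = algebraMap ℝ _ (k / n : ℝ) := by
  have hshift (w : ι → ℝ) (hw : ∑ i, w i = 1) (A : ι → Matrix (Fin n) (Fin n) ℂ) (t : ℝ) :
      ∑ i, w i • (A i + algebraMap ℝ _ t) = ∑ i, w i • A i + algebraMap ℝ _ t := by
    simp only [smul_add, sum_add_distrib, ← sum_smul, hw, one_smul]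
  rw [mem_partialConvexHull_card_iff]
  constructor
  · rintro ⟨w, A, hw, hw1, hA, hsum⟩
    refine ⟨w, fun i => A i + algebraMap ℝ _ (k / n : ℝ), hw, hw1,
      fun i => (mem_coadjointOrbit_fundWeight_iff hk).1 (hA i), ?_⟩
    rw [hshift w hw1, hsum, zero_add]
  · rintro ⟨w, P, hw, hw1, hP, hsum⟩
    refine ⟨w, fun i => P i - algebraMap ℝ _ (k / n : ℝ), hw, hw1,
      fun i => (mem_coadjointOrbit_fundWeight_iff hk).2 (by simpa using hP i), ?_⟩
    simpa [hsum] using (hshift w hw1 (fun i => P i - algebraMap ℝ _ (k / n : ℝ)) (k / n)).symm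

theorem mul_eq_of_zero_mem_partialConvexHull {n k r : ℕ} (hk0 : 0 < k) (hk : k ≤ n)
    (h : 0 ∈ partialConvexHull r (coadjointOrbit (fundWeight n k))) (hr : k * (r - 1) < n) :
    k * r = n := by
  rw [← Fintype.card_fin r, zero_mem_partialConvexHull_fundWeight_iff hk] at h
  obtain ⟨w, P, -, hw1, hP, hsum⟩ := h
  have hn : (n : ℝ) ≠ 0 := Nat.cast_ne_zero.2 (by omega)
  have hrank (i) : (P i).rank = k := Nat.cast_injective (R := ℂ) <|
    (rank_eq_trace_of_isIdempotentElem (hP i).1.isIdempotentElem).trans (hP i).2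
  have hw (i) : w i = k / n := by
    refine coeff_eq_of_sum_smul_eq_algebraMap (hP i).1.isIdempotentElem (by positivity) hsum ?_
    simpa [hrank, mul_comm] using hr
  have hkr : (r : ℝ) * (k / n) = 1 := by simpa [hw] using hw1
  field_simp at hkr
  exact_mod_cast (mul_comm (k : ℝ) r).trans hkr

theorem zero_mem_partialConvexHull_of_cover {V ι : Type*} [Fintype V] [DecidableEq V] [Fintype ι]
    {n k r : ℕ} (hV : Fintype.card V = n) (hι : Fintype.card ι = r) {S : ι → Finset V}
    (hS : ∀ i, #(S i) = k) {w : ι → ℝ} (hw : ∀ i, 0 ≤ w i) (hw1 : ∑ i, w i = 1)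
    (hcover : ∀ v, ∑ i with v ∈ S i, w i = k / n) :
    0 ∈ partialConvexHull r (coadjointOrbit (fundWeight n k)) := by
  obtain ⟨i₀, -⟩ := nonempty_of_sum_ne_zero (hw1 ▸ one_ne_zero : ∑ i, w i ≠ 0)
  have hk : k ≤ n := hV ▸ hS i₀ ▸ card_le_univ _
  let e := Fintype.equivFinOfCardEq hV
  let χ (i : ι) (a : Fin n) : ℂ := if e.symm a ∈ S i then 1 else 0
  have hχ : ∑ i, w i • χ i = algebraMap ℝ (Fin n → ℂ) (k / n) := by
    ext a
    simp [χ, ← hcover (e.symm a), sum_filter, apply_ite Complex.ofReal]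
  rw [← hι, zero_mem_partialConvexHull_fundWeight_iff hk]
  refine ⟨w, fun i => .diagonal (χ i), hw, hw1, fun i => ⟨⟨?_, ?_⟩, ?_⟩, ?_⟩
  · simp [IsIdempotentElem, χ]
  · exact Matrix.isHermitian_diagonal_iff.2 fun a => by simp only [χ]; split_ifs <;> simp
  · rw [Matrix.trace_diagonal, Equiv.sum_comp e.symm (fun v => if v ∈ S i then (1 : ℂ) else 0)]
    simp [hS]
  · calc ∑ i, w i • Matrix.diagonal (χ i) = Matrix.diagonalAlgHom ℝ (∑ i, w i • χ i) := by
          simp only [map_sum, map_smul, Matrix.diagonalAlgHom_apply]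
      _ = algebraMap ℝ _ (k / n : ℝ) := by rw [hχ, AlgHom.commutes]

theorem zero_mem_partialConvexHull_mul (k : ℕ) {m : ℕ} (hm : m ≠ 0) :
    0 ∈ partialConvexHull m (coadjointOrbit (fundWeight (k * m) k)) := by
  refine zero_mem_partialConvexHull_of_cover (V := Fin m × Fin k) (ι := Fin m)
    (S := fun i => {i} ×ˢ univ) (w := fun _ => 1 / m) (by simp [mul_comm]) (by simp) (by simp)
    (fun _ => by positivity) (by simp [hm]) fun v => ?_
  have hk : (k : ℝ) ≠ 0 := Nat.cast_ne_zero.2 v.2.pos.ne'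
  simp [Prod.ext_iff, filter_eq', div_mul_cancel_left₀ hk]

theorem zero_mem_partialConvexHull_mul_add_succ (k m : ℕ) :
    0 ∈ partialConvexHull (m + (k + 1)) (coadjointOrbit (fundWeight (k * m + (k + 1)) k)) := by
  set n := k * m + (k + 1) with hn
  have hn0 : (n : ℝ) ≠ 0 := Nat.cast_ne_zero.2 (by omega)
  refine zero_mem_partialConvexHull_of_cover (V := Fin m × Fin k ⊕ Fin (k + 1))
    (ι := Fin m ⊕ Fin (k + 1))
    (S := Sum.elim (fun i => disjSum ({i} ×ˢ univ) ∅) fun j => disjSum ∅ {j}ᶜ)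
    (w := Sum.elim (fun _ => k / n) fun _ => 1 / n) (by simp [hn, mul_comm]) (by simp) ?_ ?_ ?_ ?_
  · simp [card_compl]
  · rintro (i | j) <;> simp only [Sum.elim_inl, Sum.elim_inr] <;> positivity
  · have hsum : (m : ℝ) * (k / n) + (k + 1) * (1 / n) = 1 := by
      field_simp
      push_cast [hn]
      ring
    simpa using hsum
  · rintro (v | j)
    · simp [Prod.ext_iff, sum_filter]
    · have hcard : #{x | j ≠ x} = k := by simp [filter_ne]
      calc _ = ∑ x with j ≠ x, (1 / n : ℝ) := by rw [sum_filter, sum_filter]; simp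
        _ = k / n := by rw [sum_const, hcard, nsmul_eq_mul, mul_one_div]

/-- For `μ(n,2)` (first two coordinates `1 - 2/n`, remaining coordinates `-2/n`),
the minimal `r ≥ 1` with `0 ∈ C_r(O_{μ(n,2)})` equals `n/2` if `n` is even and
`(n+3)/2` if `n` is odd. -/
theorem minR_zero_mem_fundWeight_two (n : ℕ) (hn : 3 ≤ n) :
    IsLeast {r : ℕ | 1 ≤ r ∧
        (0 : Matrix (Fin n) (Fin n) ℂ) ∈ partialConvexHull r (coadjointOrbit
          (fun i : Fin n => if (i : ℕ) < 2 then 1 - (2 : ℝ) / n else -((2 : ℝ) / n)))}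
      (if Even n then n / 2 else (n + 3) / 2) := by
  change IsLeast {r | 1 ≤ r ∧ 0 ∈ partialConvexHull r (coadjointOrbit (fundWeight n 2))} _
  refine ⟨⟨by split_ifs <;> omega, ?_⟩, fun r ⟨_, hr⟩ => ?_⟩
  · split_ifs with heven
    · obtain ⟨m, rfl⟩ := heven.two_dvd
      simpa using zero_mem_partialConvexHull_mul 2 (m := m) (by omega)
    · obtain ⟨m, rfl⟩ : ∃ m, n = 2 * m + (2 + 1) := ⟨(n - 3) / 2, by grind⟩
      rw [show (2 * m + (2 + 1) + 3) / 2 = m + (2 + 1) by omega]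
      exact zero_mem_partialConvexHull_mul_add_succ 2 m
  · have hmul := mul_eq_of_zero_mem_partialConvexHull two_pos (by omega) hr
    split_ifs with heven <;> grind
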